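/- Let γ ∈ (1,2) and for ℓ ∈ ℤ let ω_ℓ^{(γ)} = (−1)^ℓ·Γ(1+γ)/(Γ(1+γ/2−ℓ)·Γ(1+γ/2+ℓ)). Then the family (ω_ℓ^{(γ)})_{ℓ∈ℤ} is absolutely summable, Σ_{ℓ∈ℤ} ω_ℓ^{(γ)} = 0, and consequently ω_0^{(γ)} = Σ_{ℓ≤−1} |ω_ℓ^{(γ)}| + Σ_{ℓ≥1} |ω_ℓ^{(γ)}|. -/

import Mathlib

open Real

/-- The fractional centred difference coefficients
`ω_ℓ^{(γ)} = (−1)^ℓ Γ(1+γ) / (Γ(1+γ/2−ℓ) Γ(1+γ/2+ℓ))`, `ℓ ∈ ℤ`. -/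
noncomputable def omegaFCD (γ : ℝ) (l : ℤ) : ℝ :=
  (-1 : ℝ) ^ l * Real.Gamma (1 + γ) /
    (Real.Gamma (1 + γ / 2 - l) * Real.Gamma (1 + γ / 2 + l))

theorem omega_even (γ : ℝ) (l : ℤ) : omegaFCD γ (-l) = omegaFCD γ l := by
  unfold omegaFCD
  have h : (-1 : ℝ) ^ (-l) = (-1 : ℝ) ^ l := by
    rw [zpow_neg, ← inv_zpow]; norm_num
  rw [h]
  push_cast
  rw [sub_neg_eq_add, ← sub_eq_add_neg, mul_comm (Real.Gamma (1 + γ / 2 + l))]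

theorem omega_rec (γ : ℝ) (hγ : γ ∈ Set.Ioo (1 : ℝ) 2) (n : ℕ) :
    ((n : ℝ) + 1 + γ / 2) * omegaFCD γ ((n : ℤ) + 1) = (n - γ / 2) * omegaFCD γ (n : ℤ) := by
  obtain ⟨h1, h2⟩ := hγ
  have hn : (0 : ℝ) ≤ n := n.cast_nonneg
  have hne : γ / 2 - n ≠ 0 := by
    rcases Nat.eq_zero_or_pos n with h | h
    · subst h; push_cast; linarith
    · have : (1 : ℝ) ≤ n := by exact_mod_cast h
      linarith
  have hne2 : 1 + γ / 2 + n ≠ 0 := by linarith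
  unfold omegaFCD
  push_cast
  have e1 : 1 + γ / 2 - ((n : ℝ) + 1) = γ / 2 - n := by ring
  have e2 : 1 + γ / 2 + ((n : ℝ) + 1) = (1 + γ / 2 + n) + 1 := by ring
  have e3 : 1 + γ / 2 - (n : ℝ) = (γ / 2 - n) + 1 := by ring
  rw [e1, e2, e3, Real.Gamma_add_one hne, Real.Gamma_add_one hne2,
    zpow_add_one₀ (by norm_num)]
  have hG : Real.Gamma (1 + γ / 2 + n) ≠ 0 := (Real.Gamma_pos_of_pos (by linarith)).ne'
  have hG2 : Real.Gamma (γ / 2 - n) ≠ 0 := by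
    apply Real.Gamma_ne_zero
    intro m hm
    have h3 : ((2 * n : ℤ) : ℝ) < ((2 * m + 2 + 0 : ℤ) : ℝ) + 4 * n := by
      push_cast; nlinarith [(m.cast_nonneg : (0 : ℝ) ≤ m)]
    have h4 : (n : ℝ) - m < 1 := by linarith
    have h5 : (0 : ℝ) < (n : ℝ) - m := by linarith
    have h6 : (n : ℤ) - m < 1 := by exact_mod_cast h4
    have h7 : (0 : ℤ) < (n : ℤ) - m := by exact_mod_cast h5
    omega
  have e4 : (n : ℝ) - γ / 2 = -(γ / 2 - n) := by ring
  have e5 : (n : ℝ) + 1 + γ / 2 = 1 + γ / 2 + n := by ring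
  rw [e4, e5]
  generalize Real.Gamma (1 + γ / 2 + n) = A at *
  generalize Real.Gamma (γ / 2 - n) = B at *
  generalize γ / 2 - (n : ℝ) = x at *
  generalize 1 + γ / 2 + (n : ℝ) = y at *
  field_simp

theorem omega_hasSum (γ : ℝ) (hγ : γ ∈ Set.Ioo (1 : ℝ) 2) :
    (∀ n : ℕ, omegaFCD γ ((n : ℤ) + 1) ≤ 0) ∧
    HasSum (fun n : ℕ => omegaFCD γ ((n : ℤ) + 1)) (- (omegaFCD γ 0 / 2)) := by
  have hrec := omega_rec γ hγ
  obtain ⟨h1, h2⟩ := hγ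
  have h0 : 0 < omegaFCD γ 0 := by
    unfold omegaFCD
    have := Real.Gamma_pos_of_pos (show 0 < 1 + γ by linarith)
    have := Real.Gamma_pos_of_pos (show 0 < 1 + γ / 2 by linarith)
    simp only [zpow_zero, Int.cast_zero, sub_zero, add_zero]
    positivity
  have hr0 := hrec 0
  simp only [Nat.cast_zero, zero_add, zero_sub] at hr0
  have hneg : ∀ n : ℕ, omegaFCD γ ((n : ℤ) + 1) ≤ 0 := by
    intro n
    induction n with
    | zero => simp only [Nat.cast_zero, zero_add]; nlinarith
    | succ k ih =>
      have := hrec (k + 1)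
      have hk : (0 : ℝ) ≤ k := k.cast_nonneg
      push_cast at this ⊢
      by_contra! hc
      have a1 := mul_pos (show (0 : ℝ) < (k : ℝ) + 1 + 1 + γ / 2 by linarith) hc
      have a2 := mul_nonneg (show (0 : ℝ) ≤ (k : ℝ) + 1 - γ / 2 by linarith) (neg_nonneg.2 ih)
      linarith
  refine ⟨hneg, ?_⟩
  -- partial sums
  have hps : ∀ N : ℕ, ∑ n ∈ Finset.range N, -omegaFCD γ ((n : ℤ) + 1) =
      omegaFCD γ 0 / 2 + ((N : ℝ) + 1 + γ / 2) / γ * omegaFCD γ ((N : ℤ) + 1) := by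
    intro N
    induction N with
    | zero =>
      simp only [Finset.range_zero, Finset.sum_empty, Nat.cast_zero, zero_add]
      field_simp
      linarith
    | succ k ih =>
      rw [Finset.sum_range_succ, ih]
      have := hrec (k + 1)
      push_cast at this ⊢
      field_simp
      linarith
  have hbd : ∀ N : ℕ, ((N : ℝ) + 1) * (((N : ℝ) + 1 + γ / 2) * -omegaFCD γ ((N : ℤ) + 1)) ≤
      γ / 2 * omegaFCD γ 0 := by
    intro N
    induction N with
    | zero =>
      simp only [Nat.cast_zero, zero_add]
      linarith
    | succ k ih =>
      refine le_trans ?_ ih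
      have := hrec (k + 1)
      have hk : (0 : ℝ) ≤ k := k.cast_nonneg
      have hn := neg_nonneg.2 (hneg k)
      push_cast at this ⊢
      rw [mul_neg, this, ← mul_neg, ← mul_assoc, ← mul_assoc]
      apply mul_le_mul_of_nonneg_right _ hn
      nlinarith
  have hlim : Filter.Tendsto (fun N : ℕ => ((N : ℝ) + 1 + γ / 2) / γ * omegaFCD γ ((N : ℤ) + 1))
      Filter.atTop (nhds 0) := by
    have ht := (tendsto_one_div_add_atTop_nhds_zero_nat (𝕜 := ℝ)).const_mul (-(omegaFCD γ 0 / 2))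
    rw [mul_zero] at ht
    refine tendsto_of_tendsto_of_tendsto_of_le_of_le ht tendsto_const_nhds ?_ ?_
    · intro N
      have hk : (0 : ℝ) ≤ N := N.cast_nonneg
      have := hbd N
      have hg : 0 < γ := by linarith
      show -(omegaFCD γ 0 / 2) * (1 / ((N : ℝ) + 1)) ≤
        ((N : ℝ) + 1 + γ / 2) / γ * omegaFCD γ ((N : ℤ) + 1)
      rw [mul_one_div, div_le_iff₀ (by positivity), div_mul_eq_mul_div, div_mul_eq_mul_div,
        le_div_iff₀ hg]
      linarith
    · intro N
      have hk : (0 : ℝ) ≤ N := N.cast_nonneg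
      exact mul_nonpos_of_nonneg_of_nonpos (div_nonneg (by linarith) (by linarith)) (hneg N)
  have hs : HasSum (fun n : ℕ => -omegaFCD γ ((n : ℤ) + 1)) (omegaFCD γ 0 / 2) := by
    rw [hasSum_iff_tendsto_nat_of_nonneg (fun n => neg_nonneg.2 (hneg n))]
    simp_rw [hps]
    simpa using hlim.const_add (omegaFCD γ 0 / 2)
  simpa using hs.neg

/-- For `γ ∈ (1,2)`, the family `(ω_ℓ^{(γ)})_{ℓ∈ℤ}` is absolutely summable, its sum over
`ℤ` is zero, and consequently `ω_0^{(γ)} = Σ_{ℓ≤−1} |ω_ℓ^{(γ)}| + Σ_{ℓ≥1} |ω_ℓ^{(γ)}|`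
(the two one-sided tails being indexed here by `ℓ = −(n+1)` and `ℓ = n+1`, `n ∈ ℕ`). -/
theorem stmt18 (γ : ℝ) (hγ : γ ∈ Set.Ioo (1 : ℝ) 2) :
    Summable (fun l : ℤ => |omegaFCD γ l|) ∧
      (∑' l : ℤ, omegaFCD γ l) = 0 ∧
      omegaFCD γ 0 =
        (∑' n : ℕ, |omegaFCD γ (-(n + 1) : ℤ)|) + ∑' n : ℕ, |omegaFCD γ ((n + 1) : ℤ)| := by
  obtain ⟨hneg, hs⟩ := omega_hasSum γ hγ
  have hs' : HasSum (fun n : ℕ => omegaFCD γ (-((n : ℤ) + 1))) (-(omegaFCD γ 0 / 2)) := by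
    simpa only [omega_even] using hs
  have hnat : HasSum (fun n : ℕ => omegaFCD γ (n : ℤ)) (omegaFCD γ 0 / 2) := by
    rw [← hasSum_nat_add_iff' 1]
    have e : omegaFCD γ 0 / 2 - ∑ i ∈ Finset.range 1, omegaFCD γ ((i : ℕ) : ℤ)
      = -(omegaFCD γ 0 / 2) := by
      simp only [Finset.sum_range_one, Nat.cast_zero]; ring
    rw [e]
    simpa only [Nat.cast_add, Nat.cast_one] using hs
  have hZ := HasSum.of_nat_of_neg_add_one hnat hs'
  refine ⟨hZ.summable.abs, ?_, ?_⟩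
  · rw [hZ.tsum_eq]; ring
  · simp only [omega_even]
    have : ∀ n : ℕ, |omegaFCD γ ((n : ℤ) + 1)| = -omegaFCD γ ((n : ℤ) + 1) :=
      fun n => abs_of_nonpos (hneg n)
    simp only [this]
    rw [hs.neg.tsum_eq]; ring
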